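/- Let (H,R) be quasitriangular with pairing ⟨·,·⟩: R_l ⊗ R_r → k as above. Then for all a ∈ R_l and b ∈ R_r, the following straightening identity holds in H: a b = ⟨a₁, b₁⟩⟨a₃, S(b₃)⟩ b₂ a₂. -/

import Mathlib

open scoped TensorProduct

structure QuasiTriangular (k H : Type*) [CommRing k] [Ring H] [HopfAlgebra k H] where
  R : H ⊗[k] H
  Sinv : H →ₗ[k] H
  Sinv_antipode : ∀ h : H, Sinv (HopfAlgebra.antipode (R := k) h) = h
  antipode_Sinv : ∀ h : H, HopfAlgebra.antipode (R := k) (Sinv h) = h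
  comul_fst : (TensorProduct.assoc k H H H)
      ((TensorProduct.map (Coalgebra.comul (R := k)) LinearMap.id) R)
    = (Algebra.TensorProduct.map (AlgHom.id k H) Algebra.TensorProduct.includeRight) R *
      Algebra.TensorProduct.includeRight R
  comul_snd : (TensorProduct.map LinearMap.id (Coalgebra.comul (R := k))) R
    = (Algebra.TensorProduct.map (AlgHom.id k H) Algebra.TensorProduct.includeRight) R *
      (Algebra.TensorProduct.map (AlgHom.id k H) Algebra.TensorProduct.includeLeft) R
  counit_fst : (TensorProduct.lid k H)
      ((TensorProduct.map (Coalgebra.counit (R := k)) LinearMap.id) R) = 1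
  counit_snd : (TensorProduct.rid k H)
      ((TensorProduct.map LinearMap.id (Coalgebra.counit (R := k))) R) = 1
  intertwine : ∀ h : H, (TensorProduct.comm k H H) (Coalgebra.comul (R := k) h) * R
    = R * Coalgebra.comul (R := k) h

variable (k H : Type*) [CommRing k] [Ring H] [HopfAlgebra k H]

/-- `θ f = f(R¹) R²`. -/
noncomputable def qtTheta (Q : QuasiTriangular k H) (f : Module.Dual k H) : H :=
  (TensorProduct.lid k H) ((TensorProduct.map f LinearMap.id) Q.R)

/-- `θ' f = R¹ f(R²)`. -/
noncomputable def qtThetaL (Q : QuasiTriangular k H) (f : Module.Dual k H) : H :=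
  (TensorProduct.rid k H) ((TensorProduct.map LinearMap.id f) Q.R)

/-- `R_l = {R¹ f(R²) : f ∈ H*}`. -/
noncomputable def Rl (Q : QuasiTriangular k H) : Submodule k H :=
  Submodule.span k {x | ∃ f : Module.Dual k H, x = qtThetaL k H Q f}

/-- `R_r = {f(R¹) R² : f ∈ H*}`. -/
noncomputable def Rr (Q : QuasiTriangular k H) : Submodule k H :=
  Submodule.span k {x | ∃ f : Module.Dual k H, x = qtTheta k H Q f}

/-- Convolution product of two elements of `H*`. -/
noncomputable def qtConv (f g : Module.Dual k H) : Module.Dual k H :=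
  (TensorProduct.lid k k).toLinearMap ∘ₗ (TensorProduct.map f g) ∘ₗ Coalgebra.comul (R := k)

/-- A subspace of a Hopf algebra which is a Hopf subalgebra. -/
def IsHopfSubalgebra (S : Submodule k H) : Prop :=
  (1 : H) ∈ S ∧ (∀ x ∈ S, ∀ y ∈ S, x * y ∈ S) ∧
  (∀ x ∈ S, Coalgebra.comul (R := k) x ∈ LinearMap.range (TensorProduct.map S.subtype S.subtype)) ∧
  (∀ x ∈ S, HopfAlgebra.antipode (R := k) x ∈ S)

namespace QuasiTriangular

open Coalgebra HopfAlgebra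

universe u

section Expansion

variable {k H} {Q : QuasiTriangular k H} {ι : Type*} [Fintype ι] {x y : ι → H}

lemma sum_comul_tmul (hR : Q.R = ∑ i, x i ⊗ₜ[k] y i) :
    ∑ i, TensorProduct.assoc k H H H (comul (R := k) (x i) ⊗ₜ[k] y i)
      = ∑ i, ∑ j, x i ⊗ₜ[k] (x j ⊗ₜ[k] (y i * y j)) := by
  simpa [hR, Finset.sum_mul_sum] using Q.comul_fst

lemma sum_tmul_comul (hR : Q.R = ∑ i, x i ⊗ₜ[k] y i) :
    ∑ i, x i ⊗ₜ[k] comul (R := k) (y i)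
      = ∑ i, ∑ j, (x i * x j) ⊗ₜ[k] (y j ⊗ₜ[k] y i) := by
  simpa [hR, Finset.sum_mul_sum] using Q.comul_snd

/-- The Yang–Baxter equation `R₁₂ R₁₃ R₂₃ = R₂₃ R₁₃ R₁₂`. -/
lemma yangBaxter (hR : Q.R = ∑ i, x i ⊗ₜ[k] y i) :
    ∑ i, ∑ j, ∑ m, (x m * x i) ⊗ₜ[k] ((y m * x j) ⊗ₜ[k] (y i * y j))
      = ∑ i, ∑ j, ∑ m, (x i * x m) ⊗ₜ[k] ((x j * y m) ⊗ₜ[k] (y j * y i)) := by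
  have h := sum_comul_tmul hR
  have key (z : H ⊗[k] H) (w : H) :
      TensorProduct.assoc k H H H ((Q.R * z) ⊗ₜ[k] w)
        = ∑ m, (x m ⊗ₜ[k] (y m ⊗ₜ[k] (1 : H))) * TensorProduct.assoc k H H H (z ⊗ₜ[k] w) := by
    induction z with
    | zero => simp
    | tmul u v => simp [hR, Finset.sum_mul, TensorProduct.sum_tmul]
    | add u v hu hv => simp [mul_add, TensorProduct.add_tmul, hu, hv, Finset.sum_add_distrib]
  have key' (z : H ⊗[k] H) (w : H) :
      TensorProduct.assoc k H H H ((TensorProduct.comm k H H z * Q.R) ⊗ₜ[k] w)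
        = ∑ m, TensorProduct.leftComm k H H H (TensorProduct.assoc k H H H (z ⊗ₜ[k] w))
            * (x m ⊗ₜ[k] (y m ⊗ₜ[k] (1 : H))) := by
    induction z with
    | zero => simp
    | tmul u v => simp [hR, Finset.mul_sum, TensorProduct.sum_tmul]
    | add u v hu hv => simp [add_mul, TensorProduct.add_tmul, hu, hv, Finset.sum_add_distrib]
  calc
    _ = ∑ m, (x m ⊗ₜ[k] (y m ⊗ₜ[k] (1 : H))) *
          ∑ i, TensorProduct.assoc k H H H (comul (R := k) (x i) ⊗ₜ[k] y i) := by
      rw [h]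
      simp only [Finset.mul_sum, Algebra.TensorProduct.tmul_mul_tmul, one_mul]
      rw [Finset.sum_comm_cycle]
    _ = ∑ i, TensorProduct.assoc k H H H ((Q.R * comul (R := k) (x i)) ⊗ₜ[k] y i) := by
      simp only [key, Finset.mul_sum]
      rw [Finset.sum_comm]
    _ = ∑ m, TensorProduct.leftComm k H H H
          (∑ i, TensorProduct.assoc k H H H (comul (R := k) (x i) ⊗ₜ[k] y i))
            * (x m ⊗ₜ[k] (y m ⊗ₜ[k] (1 : H))) := by
      simp only [← Q.intertwine, key', map_sum, Finset.sum_mul]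
      rw [Finset.sum_comm]
    _ = _ := by
      rw [h]
      simp only [map_sum, Finset.sum_mul, TensorProduct.leftComm_tmul,
        Algebra.TensorProduct.tmul_mul_tmul, mul_one]
      rw [← Finset.sum_comm_cycle, Finset.sum_comm]

lemma sum_antipode_mul_tmul (hR : Q.R = ∑ i, x i ⊗ₜ[k] y i) :
    ∑ i, ∑ j, (antipode k (x i) * x j) ⊗ₜ[k] (y i * y j) = (1 : H ⊗[k] H) := by
  have h := congrArg (TensorProduct.map (LinearMap.mul' k H ∘ₗ (antipode k).rTensor H) .id ∘ₗ
    (TensorProduct.assoc k H H H).symm.toLinearMap) (sum_comul_tmul hR)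
  have hc := congrArg (fun w ↦ (1 : H) ⊗ₜ[k] w) Q.counit_fst
  simp only [map_sum, LinearMap.comp_apply, LinearEquiv.coe_coe, LinearEquiv.symm_apply_apply,
    TensorProduct.map_tmul, mul_antipode_rTensor_comul_apply, LinearMap.id_apply,
    TensorProduct.assoc_symm_tmul, LinearMap.rTensor_tmul, LinearMap.mul'_apply] at h
  rw [← h, Algebra.TensorProduct.one_def, ← hc, hR]
  simp [TensorProduct.tmul_sum, Algebra.algebraMap_eq_smul_one, TensorProduct.smul_tmul]

lemma sum_mul_tmul_antipode (hR : Q.R = ∑ i, x i ⊗ₜ[k] y i) :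
    ∑ i, ∑ j, (x i * x j) ⊗ₜ[k] (antipode k (y j) * y i) = (1 : H ⊗[k] H) := by
  have h := congrArg (TensorProduct.map .id (LinearMap.mul' k H ∘ₗ (antipode k).rTensor H))
    (sum_tmul_comul hR)
  have hc := congrArg (fun w ↦ w ⊗ₜ[k] (1 : H)) Q.counit_snd
  simp only [map_sum, LinearMap.comp_apply,
    TensorProduct.map_tmul, mul_antipode_rTensor_comul_apply, LinearMap.id_apply,
    LinearMap.rTensor_tmul, LinearMap.mul'_apply] at h
  rw [← h, Algebra.TensorProduct.one_def, ← hc, hR]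
  simp [TensorProduct.sum_tmul, Algebra.algebraMap_eq_smul_one, TensorProduct.smul_tmul]

lemma Sinv_one : Q.Sinv 1 = 1 := by
  simpa using Q.Sinv_antipode 1

lemma Sinv_mul (u v : H) : Q.Sinv (u * v) = Q.Sinv v * Q.Sinv u := by
  rw [← Q.Sinv_antipode (Q.Sinv v * Q.Sinv u), antipode_mul_antidistrib, Q.antipode_Sinv,
    Q.antipode_Sinv]

lemma sum_Sinv_mul_tmul (hR : Q.R = ∑ i, x i ⊗ₜ[k] y i) :
    ∑ i, ∑ j, (Q.Sinv (x j) * x i) ⊗ₜ[k] (y i * y j) = (1 : H ⊗[k] H) := by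
  have h := congrArg (TensorProduct.map Q.Sinv .id) (sum_antipode_mul_tmul hR)
  simpa [Algebra.TensorProduct.one_def, Sinv_mul, Sinv_one, Q.Sinv_antipode] using h

/-- `(id ⊗ S) R = (S⁻¹ ⊗ id) R`: both are the inverse of `R` in `H ⊗ Hᵒᵖ`. -/
lemma sum_tmul_antipode (hR : Q.R = ∑ i, x i ⊗ₜ[k] y i) :
    ∑ i, x i ⊗ₜ[k] antipode k (y i) = ∑ i, Q.Sinv (x i) ⊗ₜ[k] y i := by
  have hl (n : ι) := congrArg (TensorProduct.map (LinearMap.mulRight k (x n))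
    (LinearMap.mulLeft k (antipode k (y n)))) (sum_Sinv_mul_tmul hR)
  have hr (j : ι) := congrArg (TensorProduct.map (LinearMap.mulLeft k (Q.Sinv (x j)))
    (LinearMap.mulRight k (y j))) (sum_mul_tmul_antipode hR)
  simp only [Algebra.TensorProduct.one_def, map_sum, TensorProduct.map_tmul,
    LinearMap.mulRight_apply, LinearMap.mulLeft_apply, one_mul, mul_one] at hl hr
  simp only [← hl, ← hr, mul_assoc]
  exact Finset.sum_comm_cycle.trans (Finset.sum_congr rfl fun _ _ ↦ Finset.sum_comm)

lemma qtTheta_eq (hR : Q.R = ∑ i, x i ⊗ₜ[k] y i) (f : Module.Dual k H) :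
    qtTheta k H Q f = ∑ i, f (x i) • y i := by
  simp [qtTheta, hR]

lemma qtThetaL_eq (hR : Q.R = ∑ i, x i ⊗ₜ[k] y i) (f : Module.Dual k H) :
    qtThetaL k H Q f = ∑ i, f (y i) • x i := by
  simp [qtThetaL, hR]

lemma comul_qtThetaL (hR : Q.R = ∑ i, x i ⊗ₜ[k] y i) (p : Module.Dual k H) :
    comul (R := k) (qtThetaL k H Q p) = ∑ i, ∑ j, p (y i * y j) • (x i ⊗ₜ[k] x j) := by
  have h := congrArg ((TensorProduct.rid k (H ⊗[k] H)).toLinearMap ∘ₗ TensorProduct.map .id p ∘ₗ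
    (TensorProduct.assoc k H H H).symm.toLinearMap) (sum_comul_tmul hR)
  simpa [qtThetaL_eq hR] using h

lemma comul_qtTheta (hR : Q.R = ∑ i, x i ⊗ₜ[k] y i) (q : Module.Dual k H) :
    comul (R := k) (qtTheta k H Q q) = ∑ i, ∑ j, q (x i * x j) • (y j ⊗ₜ[k] y i) := by
  have h := congrArg ((TensorProduct.lid k (H ⊗[k] H)).toLinearMap ∘ₗ TensorProduct.map q .id)
    (sum_tmul_comul hR)
  simpa [qtTheta_eq hR] using h

lemma comul_comul_qtThetaL (hR : Q.R = ∑ i, x i ⊗ₜ[k] y i) (p : Module.Dual k H) :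
    TensorProduct.map .id (comul (R := k)) (comul (R := k) (qtThetaL k H Q p))
      = ∑ i, ∑ j, ∑ l, p (y i * y j * y l) • (x i ⊗ₜ[k] (x j ⊗ₜ[k] x l)) := by
  have h (i : ι) := congrArg (fun w ↦ x i ⊗ₜ[k] w)
    (comul_qtThetaL hR (p ∘ₗ LinearMap.mulLeft k (y i)))
  simp only [qtThetaL_eq hR, map_sum, map_smul, TensorProduct.tmul_sum, TensorProduct.tmul_smul,
    LinearMap.comp_apply, LinearMap.mulLeft_apply, ← mul_assoc] at h
  rw [comul_qtThetaL hR]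
  simp only [map_sum, map_smul, TensorProduct.map_tmul, LinearMap.id_apply, h]

lemma comul_comul_qtTheta (hR : Q.R = ∑ i, x i ⊗ₜ[k] y i) (q : Module.Dual k H) :
    TensorProduct.map .id (comul (R := k)) (comul (R := k) (qtTheta k H Q q))
      = ∑ l, ∑ m, ∑ n, q (x n * x m * x l) • (y l ⊗ₜ[k] (y m ⊗ₜ[k] y n)) := by
  have h (l : ι) := congrArg (fun w ↦ y l ⊗ₜ[k] w)
    (comul_qtTheta hR (q ∘ₗ LinearMap.mulRight k (x l)))
  simp only [qtTheta_eq hR, map_sum, map_smul, TensorProduct.tmul_sum, TensorProduct.tmul_smul,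
    LinearMap.comp_apply, LinearMap.mulRight_apply] at h
  rw [comul_qtTheta hR, Finset.sum_comm]
  simp only [map_sum, map_smul, TensorProduct.map_tmul, LinearMap.id_apply, h]
  exact Finset.sum_congr rfl fun _ _ ↦ Finset.sum_comm

lemma sum_mul_pairing (hR : Q.R = ∑ i, x i ⊗ₜ[k] y i) (pairL : H →ₗ[k] H →ₗ[k] k)
    (hchar : ∀ (f : Module.Dual k H) (a : H), a ∈ Rl k H Q → pairL a (qtTheta k H Q f) = f a)
    {a : H} (ha : a ∈ Rl k H Q) (f : Module.Dual k H) :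
    ∑ l, f (x l) * pairL a (y l) = f a := by
  simpa [qtTheta_eq hR] using hchar f a ha

lemma sum_mul_pairing_antipode (hR : Q.R = ∑ i, x i ⊗ₜ[k] y i) (pairL : H →ₗ[k] H →ₗ[k] k)
    (hchar : ∀ (f : Module.Dual k H) (a : H), a ∈ Rl k H Q → pairL a (qtTheta k H Q f) = f a)
    {a : H} (ha : a ∈ Rl k H Q) (f : Module.Dual k H) :
    ∑ n, f (x n) * pairL a (antipode k (y n)) = f (Q.Sinv a) := by
  have h := congrArg (LinearMap.mul' k k ∘ₗ TensorProduct.map f (pairL a)) (sum_tmul_antipode hR)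
  have h' := sum_mul_pairing hR pairL hchar ha (f ∘ₗ Q.Sinv)
  simp only [map_sum, LinearMap.comp_apply, TensorProduct.map_tmul, LinearMap.mul'_apply] at h h'
  rw [h, h']

lemma sum_straighten (hR : Q.R = ∑ i, x i ⊗ₜ[k] y i) (p q : Module.Dual k H) :
    ∑ i, ∑ j, ∑ l, ∑ m, (p (y i * y j * y l) * q (Q.Sinv (x l) * x m * x i)) • (y m * x j)
      = qtThetaL k H Q p * qtTheta k H Q q := by
  have yb (l : ι) := congrArg ((TensorProduct.lid k H).toLinearMap ∘ₗ
    TensorProduct.map (q ∘ₗ LinearMap.mulLeft k (Q.Sinv (x l)))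
      ((TensorProduct.rid k H).toLinearMap ∘ₗ TensorProduct.map .id (p ∘ₗ LinearMap.mulRight k (y l))))
    (yangBaxter hR)
  have inv (j m : ι) := congrArg (LinearMap.mul' k k ∘ₗ
    TensorProduct.map (q ∘ₗ LinearMap.mulRight k (x m)) (p ∘ₗ LinearMap.mulLeft k (y j)))
    (sum_Sinv_mul_tmul hR)
  simp only [Algebra.TensorProduct.one_def, map_sum, LinearMap.comp_apply, LinearEquiv.coe_coe,
    TensorProduct.map_tmul, LinearMap.mul'_apply, LinearMap.mulRight_apply, LinearMap.id_apply,
    LinearMap.mulLeft_apply, TensorProduct.lid_tmul, TensorProduct.rid_tmul, smul_smul,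
    one_mul, mul_one, ← mul_assoc] at yb inv
  calc
    _ = ∑ l, ∑ i, ∑ j, ∑ m,
          (q (Q.Sinv (x l) * x m * x i) * p (y i * y j * y l)) • (y m * x j) := by
      simp only [mul_comm (p _)]
      exact Finset.sum_comm_cycle
    _ = ∑ j, ∑ m, (∑ i, ∑ l,
          q (Q.Sinv (x l) * x i * x m) * p (y j * y i * y l)) • (x j * y m) := by
      rw [Finset.sum_congr rfl fun l _ ↦ yb l]
      simp only [Finset.sum_smul]
      refine Finset.sum_comm_cycle.trans (Finset.sum_congr rfl fun _ _ ↦ ?_)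
      exact Finset.sum_comm_cycle.trans (Finset.sum_congr rfl fun _ _ ↦ Finset.sum_comm)
    _ = _ := by
      simp only [inv, qtTheta_eq hR, qtThetaL_eq hR, Finset.sum_mul_sum, smul_mul_smul_comm]
      simp only [mul_comm (q _)]

lemma mem_Rl {a : H} : a ∈ Rl k H Q ↔ ∃ p, a = qtThetaL k H Q p := by
  refine ⟨fun h ↦ ?_, fun h ↦ Submodule.subset_span h⟩
  induction h using Submodule.span_induction with
  | mem _ h => exact h
  | zero => exact ⟨0, by simp [qtThetaL]⟩
  | add _ _ _ _ hu hv =>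
    obtain ⟨f, rfl⟩ := hu
    obtain ⟨g, rfl⟩ := hv
    exact ⟨f + g, by simp [qtThetaL, TensorProduct.map_add_right]⟩
  | smul c _ _ hu =>
    obtain ⟨f, rfl⟩ := hu
    exact ⟨c • f, by simp [qtThetaL, TensorProduct.map_smul_right]⟩

lemma mem_Rr {b : H} : b ∈ Rr k H Q ↔ ∃ q, b = qtTheta k H Q q := by
  refine ⟨fun h ↦ ?_, fun h ↦ Submodule.subset_span h⟩
  induction h using Submodule.span_induction with
  | mem _ h => exact h
  | zero => exact ⟨0, by simp [qtTheta]⟩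
  | add _ _ _ _ hu hv =>
    obtain ⟨f, rfl⟩ := hu
    obtain ⟨g, rfl⟩ := hv
    exact ⟨f + g, by simp [qtTheta, TensorProduct.map_add_left]⟩
  | smul c _ _ hu =>
    obtain ⟨f, rfl⟩ := hu
    exact ⟨c • f, by simp [qtTheta, TensorProduct.map_smul_left]⟩

end Expansion

lemma exists_expansion {k : Type*} {H : Type u} [Field k] [Ring H] [HopfAlgebra k H]
    (Q : QuasiTriangular k H) : ∃ (ι : Type u) (_ : Fintype ι) (x y : ι → H),
    (∀ i, x i ∈ Rl k H Q) ∧ Q.R = ∑ i, x i ⊗ₜ[k] y i := by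
  classical
  let e := Module.Basis.ofVectorSpace k H
  let c := TensorProduct.equivFinsuppOfBasisRight (M := H) e Q.R
  refine ⟨c.support, inferInstance, fun i ↦ c i, fun i ↦ e i, fun i ↦ ?_, ?_⟩
  · exact mem_Rl.2 ⟨e.coord i, TensorProduct.equivFinsuppOfBasisRight_apply e Q.R i⟩
  · rw [Finset.sum_coe_sort c.support fun i ↦ c i ⊗ₜ[k] e i]
    exact ((LinearEquiv.symm_apply_apply _ Q.R).symm.trans
      (TensorProduct.equivFinsuppOfBasisRight_symm_apply e c))

end QuasiTriangular

/- STATEMENT 8: the straightening identity `a b = ⟨a₁, b₁⟩ ⟨a₃, S(b₃)⟩ b₂ a₂` in `H`, for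
`a ∈ R_l`, `b ∈ R_r`.  The iterated comultiplications are expressed through arbitrary finite
representations of `(id ⊗ Δ)(Δ a)` and `(id ⊗ Δ)(Δ b)` in `H ⊗ (H ⊗ H)`. -/
theorem radford_straightening
    (k H : Type*) [Field k] [Ring H] [HopfAlgebra k H] (Q : QuasiTriangular k H)
    (pairL : H →ₗ[k] H →ₗ[k] k)
    (hchar : ∀ (f : Module.Dual k H) (a : H), a ∈ Rl k H Q →
      pairL a (qtTheta k H Q f) = f a)
    (a b : H) (ha : a ∈ Rl k H Q) (hb : b ∈ Rr k H Q)
    (n : ℕ) (a1 a2 a3 : Fin n → H)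
    (hA : (∑ i, a1 i ⊗ₜ[k] (a2 i ⊗ₜ[k] a3 i))
      = (TensorProduct.map LinearMap.id (Coalgebra.comul (R := k)))
          (Coalgebra.comul (R := k) a))
    (m : ℕ) (b1 b2 b3 : Fin m → H)
    (hB : (∑ j, b1 j ⊗ₜ[k] (b2 j ⊗ₜ[k] b3 j))
      = (TensorProduct.map LinearMap.id (Coalgebra.comul (R := k)))
          (Coalgebra.comul (R := k) b)) :
    a * b = ∑ i, ∑ j,
      (pairL (a1 i) (b1 j) * pairL (a3 i) (HopfAlgebra.antipode (R := k) (b3 j)))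
        • (b2 j * a2 i) := by
  obtain ⟨p, rfl⟩ := QuasiTriangular.mem_Rl.1 ha
  obtain ⟨q, rfl⟩ := QuasiTriangular.mem_Rr.1 hb
  obtain ⟨ι, _, x, y, hx, hR⟩ := Q.exists_expansion
  rw [QuasiTriangular.comul_comul_qtThetaL hR] at hA
  rw [QuasiTriangular.comul_comul_qtTheta hR] at hB
  let S : H →ₗ[k] H := HopfAlgebra.antipode k
  -- contracting the outer factors of `H ⊗ (H ⊗ H)` against functionals
  let C (f h : H →ₗ[k] k) (g : H →ₗ[k] H) : H ⊗[k] (H ⊗[k] H) →ₗ[k] H :=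
    (TensorProduct.lid k H).toLinearMap ∘ₗ
      TensorProduct.map f ((TensorProduct.rid k H).toLinearMap ∘ₗ TensorProduct.map g h)
  have hC (f h : H →ₗ[k] k) (g : H →ₗ[k] H) (u v w : H) :
      C f h g (u ⊗ₜ (v ⊗ₜ w)) = (f u * h w) • g v := by
    simp [C, smul_smul, mul_comm]
  have hA' (j : Fin m) := congrArg
    (C (pairL.flip (b1 j)) (pairL.flip (S (b3 j))) (LinearMap.mulLeft k (b2 j))) hA
  have hB' (i j l : ι) := congrArg
    (C (pairL (x i)) (pairL (x l) ∘ₗ S) (LinearMap.mulRight k (x j))) hB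
  simp only [map_sum, map_smul, hC, LinearMap.flip_apply, LinearMap.mulLeft_apply,
    LinearMap.mulRight_apply, LinearMap.comp_apply] at hA' hB'
  rw [Finset.sum_comm, Finset.sum_congr rfl fun j _ ↦ hA' j, Finset.sum_comm,
    ← QuasiTriangular.sum_straighten hR]
  symm
  refine Finset.sum_congr rfl fun i _ ↦ ?_
  rw [Finset.sum_comm]
  refine Finset.sum_congr rfl fun j _ ↦ ?_
  rw [Finset.sum_comm]
  refine Finset.sum_congr rfl fun l _ ↦ ?_
  rw [← Finset.smul_sum, hB', Finset.sum_comm, Finset.smul_sum]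
  refine Finset.sum_congr rfl fun r _ ↦ ?_
  have h1 (t : ι) := QuasiTriangular.sum_mul_pairing hR pairL hchar (hx i)
    (q ∘ₗ LinearMap.mulLeft k (x t * x r))
  have h2 := QuasiTriangular.sum_mul_pairing_antipode hR pairL hchar (hx l)
    (q ∘ₗ LinearMap.mulRight k (x r * x i))
  simp only [LinearMap.comp_apply, LinearMap.mulLeft_apply, LinearMap.mulRight_apply,
    ← mul_assoc] at h1 h2
  simp only [smul_smul, ← Finset.sum_smul]
  rw [← h2, Finset.sum_comm]
  simp only [← h1, Finset.sum_mul]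
  refine congrArg (fun c ↦ (p (y i * y j * y l) * c) • (y r * x j))
    (Finset.sum_congr rfl fun t _ ↦ Finset.sum_congr rfl fun s _ ↦ ?_)
  exact (mul_assoc _ _ _).symm
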